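/- Let n ≥ 1 and let w be a permutation of [n]. If w avoids the permutation patterns 1432 and 1423, then the Schubert polynomial S_w(x) equals Max_w(x). -/

import Mathlib

open MvPolynomial

/-- Gale order: `C ≤ D` iff same cardinality and for each `k`, the `k`-th least element of `C`
is at most the `k`-th least element of `D`. -/
def GaleLE {n : ℕ} (C D : Finset (Fin n)) : Prop :=
  C.card = D.card ∧ ∀ (k : ℕ) (hC : k < C.card) (hD : k < D.card),
    (C.orderIsoOfFin rfl ⟨k, hC⟩ : Fin n) ≤ (D.orderIsoOfFin rfl ⟨k, hD⟩ : Fin n)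

/-- `C ≤ D` for diagrams: columnwise Gale order. -/
def DiagramLE {n : ℕ} (C D : Fin n → Finset (Fin n)) : Prop := ∀ j, GaleLE (C j) (D j)

/-- The Rothe diagram of a permutation `w` (0-indexed): column `j` consists of the rows `i`
with `w i > j` and `i < w⁻¹ j`. -/
def rothe {n : ℕ} (w : Equiv.Perm (Fin n)) (j : Fin n) : Finset (Fin n) :=
  Finset.univ.filter fun i => j < w i ∧ i < w.symm j

/-- The monomial `x^C = ∏_j ∏_{i ∈ C_j} x_i` of a diagram `C`. -/
noncomputable def xDiagram {n : ℕ} (C : Fin n → Finset (Fin n)) : MvPolynomial (Fin n) ℤ :=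
  ∏ j, ∏ i ∈ C j, X i

/- `Max_D(x) = ∑_{C ≤ D} x^C`, summed over all diagrams `C` with `C ≤ D`. -/
open scoped Classical in
noncomputable def MaxPoly {n : ℕ} (D : Fin n → Finset (Fin n)) : MvPolynomial (Fin n) ℤ :=
  ∑ C ∈ Finset.univ.filter (fun C : Fin n → Finset (Fin n) => DiagramLE C D), xDiagram C

/-- `S` is the family of Schubert polynomials: `S_{w₀} = x_1^{n-1} ⋯ x_{n-1}` for the longest
permutation `w₀` (i.e. `Fin.revPerm`), and whenever `w_i < w_{i+1}`,
`S_w = ∂_i S_{w s_i}`, expressed denominator-free as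
`(x_i - x_{i+1}) S_w = S_{w s_i} - s_i · S_{w s_i}`. -/
def IsSchubertFamily {n : ℕ} (S : Equiv.Perm (Fin n) → MvPolynomial (Fin n) ℤ) : Prop :=
  S Fin.revPerm = (∏ i : Fin n, X i ^ (n - 1 - (i : ℕ))) ∧
  ∀ (w : Equiv.Perm (Fin n)) (i j : Fin n), (i : ℕ) + 1 = (j : ℕ) → w i < w j →
    (X i - X j) * S w =
      S (w * Equiv.swap i j) - rename (Equiv.swap i j) (S (w * Equiv.swap i j))

/-- `w` contains the pattern `π`: there is a strictly increasing choice of positions on which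
`w` is order isomorphic to `π`. -/
def ContainsPattern {n m : ℕ} (w : Equiv.Perm (Fin n)) (π : Fin m → ℕ) : Prop :=
  ∃ f : Fin m ↪o Fin n, ∀ s t : Fin m, π s < π t ↔ w (f s) < w (f t)

/-- `w` avoids the pattern `π`. -/
def AvoidsPattern {n m : ℕ} (w : Equiv.Perm (Fin n)) (π : Fin m → ℕ) : Prop :=
  ¬ ContainsPattern w π

/- Every `w ≠ w₀` has an ascent `w i < w j`, `j = i + 1`, at which `w i` is a left-to-right minimum,
and passing from `w` to `w s_i` at such ascents leads up to `w₀` while preserving avoidance. The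
polynomial `Max` is a product over the columns of the Rothe diagram, so it remains to follow the
columns in one such step. The column with index `w i` is an initial segment, and it gains exactly
the box in row `i`. The other columns of `w` arise from those of `w s_i` by exchanging the rows `i`
and `j`, and this replaces a column polynomial `f` by `∂_i (x_i f)`. The polynomial of a column
which does not contain `i` without `j` is symmetric in `x_i` and `x_j`; avoidance of 1432 and 1423
leaves at most one other column, so `∂_i` of the whole product is the product of the new columns. -/

open Finset Equiv
open scoped Pointwise

section AdjacentSwap

variable {α : Type*} [DecidableEq α]

lemma mem_swap_smul_finset {i j a : α} {C : Finset α} :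
    a ∈ swap i j • C ↔ swap i j a ∈ C := by
  rw [← inv_smul_mem_iff, swap_inv, Perm.smul_def]

lemma swap_smul_finset_eq_self {i j : α} {C : Finset α} (h : i ∈ C ↔ j ∈ C) :
    swap i j • C = C := by
  ext a
  rw [mem_swap_smul_finset, swap_apply_def]
  split_ifs with hi hj
  · rw [hi, h]
  · rw [hj, h]
  · rfl

lemma card_swap_smul_inter {i j : α} {U : Finset α} (hU : i ∈ U ↔ j ∈ U) (C : Finset α) :
    #((swap i j • C) ∩ U) = #(C ∩ U) := by
  rw [← swap_smul_finset_eq_self hU, ← smul_finset_inter, card_smul_finset,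
    swap_smul_finset_eq_self hU]

lemma card_inter_insert {a : α} {U : Finset α} (ha : a ∉ U) (C : Finset α) :
    #(C ∩ insert a U) = #(C ∩ U) + if a ∈ C then 1 else 0 := by
  grind

end AdjacentSwap

section CovBy

variable {α : Type*} [LinearOrder α]

lemma swap_lt_swap_iff_of_covBy {i j a b : α} (hij : i ⋖ j) (hne : ¬(a = i ∧ b = j))
    (hne' : ¬(a = j ∧ b = i)) : swap i j a < swap i j b ↔ a < b := by
  have hleft {c : α} (hc : c ≠ i) : c < j ↔ c < i := by
    rw [hij.lt_iff_le_left, hc.le_iff_lt]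
  have hright {c : α} (hc : c ≠ j) : i < c ↔ j < c := by
    rw [hij.lt_iff_le_right, hc.symm.le_iff_lt]
  rw [swap_apply_def, swap_apply_def]
  split_ifs <;> grind [hij.lt]

lemma eq_Iic_of_isLowerSet_of_covBy [LocallyFiniteOrderBot α] {i j : α} (hij : i ⋖ j)
    {U : Finset α} (hU : IsLowerSet (U : Set α)) (hi : i ∈ U) (hj : j ∉ U) : U = Iic i := by
  ext a
  rw [mem_Iic]
  refine ⟨fun ha => ?_, fun ha => hU ha hi⟩
  by_contra! hia
  exact hj (hU (hij.lt_iff_le_right.1 hia) ha)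

lemma forall_isLowerSet_iff_of_covBy [LocallyFiniteOrderBot α] {i j : α} (hij : i ⋖ j)
    {P : Finset α → Prop} :
    (∀ U : Finset α, IsLowerSet (U : Set α) → P U) ↔
      (∀ U : Finset α, IsLowerSet (U : Set α) → (i ∈ U ↔ j ∈ U) → P U) ∧ P (Iic i) := by
  refine ⟨fun h => ⟨fun U hU _ => h U hU, h _ (by simpa using isLowerSet_Iic i)⟩,
    fun ⟨h, hi⟩ U hU => ?_⟩
  by_cases hUij : i ∈ U ↔ j ∈ U
  · exact h U hU hUij
  · have hji : j ∈ U → i ∈ U := fun hj => hU hij.le hj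
    rwa [eq_Iic_of_isLowerSet_of_covBy hij hU (by tauto) (by tauto)]

end CovBy

section GaleOrder

lemma card_inter_eq_card_filter_orderEmbOfFin {α : Type*} [LinearOrder α] {m : ℕ} {C : Finset α}
    (hC : #C = m) (U : Finset α) : #(C ∩ U) = #{k | C.orderEmbOfFin hC k ∈ U} := by
  rw [← filter_mem_eq_inter]
  conv_lhs => rw [← C.map_orderEmbOfFin_univ hC]
  rw [filter_map, card_map]
  rfl

variable {n : ℕ} {C D E : Finset (Fin n)}

lemma galeLE_iff_orderEmbOfFin {m : ℕ} (hC : #C = m) (hD : #D = m) :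
    GaleLE C D ↔ ∀ k, C.orderEmbOfFin hC k ≤ D.orderEmbOfFin hD k := by
  subst hC
  have hcast (k : ℕ) (hk : k < #C) (hk' : k < #D) :
      D.orderEmbOfFin hD ⟨k, hk⟩ = D.orderEmbOfFin rfl ⟨k, hk'⟩ :=
    D.orderEmbOfFin_eq_orderEmbOfFin_iff.2 rfl
  refine ⟨fun h k => ?_, fun h => ⟨hD.symm, fun k hk hk' => ?_⟩⟩
  · exact (h.2 k k.2 (k.2.trans_eq hD.symm)).trans_eq (hcast k _ _).symm
  · exact (h ⟨k, hk⟩).trans_eq (hcast k hk hk')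

/- Comparing `k`-th least elements amounts to comparing numbers of elements in initial segments,
which are easier to track when two neighbouring elements are exchanged. -/
lemma galeLE_iff_card_inter_le :
    GaleLE C D ↔ #C = #D ∧ ∀ U : Finset (Fin n), IsLowerSet (U : Set (Fin n)) →
      #(D ∩ U) ≤ #(C ∩ U) := by
  rw [← and_iff_right_of_imp (a := #C = #D) (fun h : GaleLE C D => h.1)]
  refine and_congr_right fun hcard => ?_
  simp only [galeLE_iff_orderEmbOfFin hcard rfl, card_inter_eq_card_filter_orderEmbOfFin hcard,
    card_inter_eq_card_filter_orderEmbOfFin (C := D) rfl]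
  refine ⟨fun h U hU => card_le_card ?_, fun h k => ?_⟩
  · exact monotone_filter_right _ fun k _ hk => hU (h k) hk
  · by_contra! hlt
    let U := Iic (D.orderEmbOfFin rfl k)
    have hDU : Iic k ⊆ ({l | D.orderEmbOfFin rfl l ∈ U} : Finset _) := by
      intro l hl
      simpa [U] using hl
    have hCU : ({l | C.orderEmbOfFin hcard l ∈ U} : Finset _) ⊆ Iio k := by
      intro l hl
      simp only [U, mem_filter, mem_univ, true_and, mem_Iic] at hl
      exact mem_Iio.2 ((C.orderEmbOfFin hcard).lt_iff_lt.1 (hl.trans_lt hlt))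
    have hle : #(Iic k) ≤ #(Iio k) :=
      calc #(Iic k) ≤ #{l | D.orderEmbOfFin rfl l ∈ U} := card_le_card hDU
        _ ≤ #{l | C.orderEmbOfFin hcard l ∈ U} := h U (by simpa [U] using isLowerSet_Iic _)
        _ ≤ #(Iio k) := card_le_card hCU
    simp at hle

lemma galeLE_refl (C : Finset (Fin n)) : GaleLE C C := ⟨rfl, fun _ _ _ => le_rfl⟩

lemma GaleLE.trans (h : GaleLE C D) (h' : GaleLE D E) : GaleLE C E :=
  ⟨h.1.trans h'.1, fun k hC hE => (h.2 k hC (h'.1 ▸ hE)).trans (h'.2 k (h'.1 ▸ hE) hE)⟩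

lemma galeLE_iff_eq_of_isLowerSet (hD : IsLowerSet (D : Set (Fin n))) : GaleLE C D ↔ C = D := by
  refine ⟨fun h => ?_, fun h => h ▸ galeLE_refl C⟩
  obtain ⟨hcard, hle⟩ := galeLE_iff_card_inter_le.1 h
  have hsub : C ⊆ D := by
    rw [← inter_eq_left]
    refine eq_of_subset_of_card_le inter_subset_left ?_
    simpa [hcard] using hle D hD
  exact eq_of_subset_of_card_le hsub hcard.ge

variable {i j : Fin n}

/- The only initial segment separating `i` from its successor `j` is `Iic i`. Its inequality lies
between those of `Iio i` and `Iic j`, and follows from one of them under either alternative. -/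
lemma galeLE_iff_of_covBy (hij : i ⋖ j) (h : (i ∈ D → j ∈ D) ∨ (j ∈ C → i ∈ C)) :
    GaleLE C D ↔ #C = #D ∧ ∀ U : Finset (Fin n), IsLowerSet (U : Set (Fin n)) →
      (i ∈ U ↔ j ∈ U) → #(D ∩ U) ≤ #(C ∩ U) := by
  rw [galeLE_iff_card_inter_le, forall_isLowerSet_iff_of_covBy hij]
  refine and_congr_right fun _ => and_iff_left_of_imp fun hU => ?_
  have hIio : #(D ∩ Iio i) ≤ #(C ∩ Iio i) :=
    hU _ (by simpa using isLowerSet_Iio i) (by simp [hij.le])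
  have hIic : #(D ∩ Iic j) ≤ #(C ∩ Iic j) :=
    hU _ (by simpa using isLowerSet_Iic j) (by simp [hij.le])
  have hsucc (B : Finset (Fin n)) : #(B ∩ Iic i) = #(B ∩ Iio i) + if i ∈ B then 1 else 0 := by
    rw [← Iio_insert, card_inter_insert (by simp)]
  have hsucc' (B : Finset (Fin n)) : #(B ∩ Iic j) = #(B ∩ Iic i) + if j ∈ B then 1 else 0 := by
    have hIio_eq : Iio j = Iic i := by ext; simp [hij.lt_iff_le_left]
    rw [← Iio_insert, card_inter_insert (by simp), hIio_eq]
  grind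

lemma galeLE_swap_smul_left_iff (hij : i ⋖ j) (hD : i ∈ D → j ∈ D) :
    GaleLE (swap i j • C) D ↔ GaleLE C D := by
  rw [galeLE_iff_of_covBy hij (.inl hD), galeLE_iff_of_covBy hij (.inl hD), card_smul_finset]
  simp +contextual only [card_swap_smul_inter]

lemma galeLE_swap_smul_right_iff (hij : i ⋖ j) (hC : j ∈ C → i ∈ C) :
    GaleLE C (swap i j • D) ↔ GaleLE C D := by
  rw [galeLE_iff_of_covBy hij (.inr hC), galeLE_iff_of_covBy hij (.inr hC), card_smul_finset]
  simp +contextual only [card_swap_smul_inter]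

lemma galeLE_swap_smul_self (hij : i ⋖ j) (hC : j ∈ C → i ∈ C) : GaleLE C (swap i j • C) :=
  (galeLE_swap_smul_right_iff hij hC).2 (galeLE_refl C)

end GaleOrder

section Demazure

variable {σ R : Type*} [DecidableEq σ] [CommRing R] {i j : σ}

/-- `g = π_i f`, where `π_i f = ∂_i (x_i f)` is the isobaric divided difference (Demazure) operator
exchanging the variables `i` and `j`; as in `IsSchubertFamily`, the denominator is cleared. -/
def IsDemazure (i j : σ) (f g : MvPolynomial σ R) : Prop :=
  (X i - X j) * g = X i * f - rename (swap i j) (X i * f)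

lemma isDemazure_iff {f g : MvPolynomial σ R} :
    IsDemazure i j f g ↔ (X i - X j) * g = X i * f - X j * rename (swap i j) f := by
  rw [IsDemazure, map_mul, rename_X, swap_apply_left]

lemma IsDemazure.mul_left {f g h : MvPolynomial σ R} (hh : rename (swap i j) h = h)
    (hfg : IsDemazure i j f g) : IsDemazure i j (h * f) (h * g) := by
  rw [isDemazure_iff] at hfg ⊢
  rw [map_mul, hh]
  linear_combination h * hfg

lemma isDemazure_iff_eq_of_rename_eq [IsDomain R] (hij : i ≠ j) {f g : MvPolynomial σ R}
    (hf : rename (swap i j) f = f) : IsDemazure i j f g ↔ g = f := by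
  have hX : (X i - X j : MvPolynomial σ R) ≠ 0 := sub_ne_zero.2 ((X_inj i j).not.2 hij)
  rw [isDemazure_iff, hf, ← sub_mul, mul_right_inj' hX]

lemma isDemazure_prod [IsDomain R] (hij : i ≠ j) {ι : Type*} {f g : ι → MvPolynomial σ R}
    (s : Finset ι) (hfg : ∀ a ∈ s, IsDemazure i j (f a) (g a))
    (hsub : {a | a ∈ s ∧ rename (swap i j) (f a) ≠ f a}.Subsingleton) :
    IsDemazure i j (∏ a ∈ s, f a) (∏ a ∈ s, g a) := by
  classical
  induction s using Finset.induction with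
  | empty => simp [isDemazure_iff_eq_of_rename_eq hij]
  | insert a s ha ih =>
    have hfg_s (b) (hb : b ∈ s) := hfg b (mem_insert_of_mem hb)
    rw [prod_insert ha, prod_insert ha]
    by_cases hfa : rename (swap i j) (f a) = f a
    · rw [(isDemazure_iff_eq_of_rename_eq hij hfa).1 (hfg a (mem_insert_self a s))]
      refine (ih hfg_s (hsub.anti ?_)).mul_left hfa
      exact fun b hb => ⟨mem_insert_of_mem hb.1, hb.2⟩
    · have hf_s (b) (hb : b ∈ s) : rename (swap i j) (f b) = f b := by
        by_contra hfb
        exact ha (hsub ⟨mem_insert_self a s, hfa⟩ ⟨mem_insert_of_mem hb, hfb⟩ ▸ hb)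
      have hprod : ∏ b ∈ s, g b = ∏ b ∈ s, f b := prod_congr rfl fun b hb =>
        (isDemazure_iff_eq_of_rename_eq hij (hf_s b hb)).1 (hfg_s b hb)
      rw [hprod, mul_comm (f a), mul_comm (g a)]
      refine (hfg a (mem_insert_self a s)).mul_left ?_
      rw [map_prod, prod_congr rfl hf_s]

lemma rename_swap_prod_X (C : Finset σ) :
    rename (swap i j) (∏ a ∈ C, X a : MvPolynomial σ R) = ∏ a ∈ swap i j • C, X a := by
  simp [smul_finset_def]

lemma X_mul_prod_X_of_mem_of_notMem {C : Finset σ} (hi : i ∉ C) (hj : j ∈ C) :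
    (X i * ∏ a ∈ C, X a : MvPolynomial σ R) = X j * ∏ a ∈ swap i j • C, X a := by
  have hj' : j ∉ swap i j • C := by rwa [mem_swap_smul_finset, swap_apply_right]
  rw [← prod_insert hi, ← prod_insert hj']
  congr 1
  ext a
  rw [mem_insert, mem_insert, mem_swap_smul_finset, swap_apply_def]
  grind

end Demazure

section GalePoly

variable {n : ℕ} {i j : Fin n}

open scoped Classical in
/-- The contribution `∑_{C ≤ D} x^C` of a single column `D` to `MaxPoly`. -/
noncomputable def galePoly (D : Finset (Fin n)) : MvPolynomial (Fin n) ℤ :=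
  ∑ C with GaleLE C D, ∏ a ∈ C, X a

lemma maxPoly_eq_prod_galePoly (D : Fin n → Finset (Fin n)) :
    MaxPoly D = ∏ k, galePoly (D k) := by
  classical
  simp only [MaxPoly, galePoly, xDiagram, prod_univ_sum]
  refine sum_congr ?_ fun _ _ => rfl
  ext C
  simp only [mem_filter, mem_univ, true_and, Fintype.mem_piFinset]
  rfl

lemma galePoly_of_isLowerSet {D : Finset (Fin n)} (hD : IsLowerSet (D : Set (Fin n))) :
    galePoly D = ∏ a ∈ D, X a := by
  simp [galePoly, galeLE_iff_eq_of_isLowerSet hD, filter_eq']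

lemma galePoly_Iio (i : Fin n) : galePoly (Iio i) = ∏ a ∈ Iio i, X a :=
  galePoly_of_isLowerSet (by simpa using isLowerSet_Iio i)

lemma galePoly_Iic (i : Fin n) : galePoly (Iic i) = X i * galePoly (Iio i) := by
  rw [galePoly_Iio, ← prod_insert (by simp), Iio_insert,
    galePoly_of_isLowerSet (by simpa using isLowerSet_Iic i)]

lemma rename_swap_galePoly (hij : i ⋖ j) {D : Finset (Fin n)} (hD : i ∈ D → j ∈ D) :
    rename (swap i j) (galePoly D) = galePoly D := by
  classical
  simp only [galePoly, map_sum, rename_swap_prod_X]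
  exact sum_equiv (MulAction.toPerm (swap i j))
    (fun C => by simp [galeLE_swap_smul_left_iff hij hD]) fun _ _ => rfl

/- The diagrams `C` counted by `galePoly (swap i j • D)` but not by `galePoly D` contain `j` and not
`i`; then `x_i x^C` is symmetric in `x_i` and `x_j`, so it is killed by the divided difference. -/
lemma isDemazure_galePoly_swap_smul (hij : i ⋖ j) {D : Finset (Fin n)} (hD : j ∈ D → i ∈ D) :
    IsDemazure i j (galePoly D) (galePoly (swap i j • D)) := by
  classical
  have hsymm : rename (swap i j) (galePoly (swap i j • D)) = galePoly (swap i j • D) :=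
    rename_swap_galePoly hij (by simpa [mem_swap_smul_finset] using hD)
  have hself := (isDemazure_iff_eq_of_rename_eq hij.ne hsymm).2 rfl
  rw [isDemazure_iff] at hself ⊢
  rw [hself]
  simp only [galePoly, map_sum, rename_swap_prod_X, mul_sum, ← sum_sub_distrib]
  symm
  refine sum_subset (fun C => ?_) fun C hC hCD => ?_
  · simpa using fun hC => hC.trans (galeLE_swap_smul_self hij hD)
  · simp only [mem_filter, mem_univ, true_and] at hC hCD
    have hCij : ¬(j ∈ C → i ∈ C) := fun h => hCD ((galeLE_swap_smul_right_iff hij h).1 hC)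
    rw [Classical.not_imp] at hCij
    rw [X_mul_prod_X_of_mem_of_notMem hCij.2 hCij.1, sub_self]

end GalePoly

section Perm

variable {n : ℕ} {w : Perm (Fin n)} {i j : Fin n}

/-- `w` has an ascent at the consecutive positions `i` and `j`, and `w i` is a left-to-right
minimum of `w`. The induction passes from `w` to `w * swap i j` at such an ascent, which is where
the column of the Rothe diagram with index `w i` is an initial segment. -/
structure IsMinAscent (w : Perm (Fin n)) (i j : Fin n) : Prop where
  covBy : i ⋖ j
  lt : w i < w j
  lt_of_lt : ∀ a < i, w i < w a

/-- Joint avoidance of the patterns 1432 and 1423: given entries playing the roles of 1 and 4, at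
most one entry can play the role of 2 or 3. -/
def Avoids1432And1423 (w : Perm (Fin n)) : Prop :=
  ∀ ⦃a b⦄, a < b → {c | b < c ∧ w a < w c ∧ w c < w b}.Subsingleton

lemma avoids1432And1423_of_avoidsPattern (h1432 : AvoidsPattern w ![1, 4, 3, 2])
    (h1423 : AvoidsPattern w ![1, 4, 2, 3]) : Avoids1432And1423 w := by
  rintro a b hab c ⟨hbc, hac, hcb⟩ d ⟨hbd, had, hdb⟩
  by_contra! hne
  wlog hcd : c < d generalizing c d
  · exact this hbd had hdb hbc hac hcb hne.symm (hne.symm.lt_of_le (not_lt.1 hcd))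
  have hmono : StrictMono ![a, b, c, d] := by
    simp [Fin.strictMono_iff_lt_succ, Fin.forall_fin_succ, hab, hbc, hcd]
  have hwab := hac.trans hcb
  rcases (w.injective.ne hne).lt_or_gt with hlt | hgt
  · refine h1423 ⟨.ofStrictMono _ hmono, fun s t => ?_⟩
    fin_cases s <;> fin_cases t <;> simp [le_of_lt, *]
  · refine h1432 ⟨.ofStrictMono _ hmono, fun s t => ?_⟩
    fin_cases s <;> fin_cases t <;> simp [le_of_lt, *]

lemma Avoids1432And1423.mul_swap (hw : Avoids1432And1423 w) (h : IsMinAscent w i j) :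
    Avoids1432And1423 (w * swap i j) := by
  rintro a b hab c ⟨hbc, hac, hcb⟩ d ⟨hbd, had, hdb⟩
  simp only [Perm.mul_apply] at hac hcb had hdb
  have hswap_lt {x y : Fin n} (hxy : x < y) (hne : ¬(x = i ∧ y = j)) : swap i j x < swap i j y :=
    (swap_lt_swap_iff_of_covBy h.covBy hne (by rintro ⟨rfl, rfl⟩; exact hxy.asymm h.covBy.lt)).2 hxy
  have hab_ne : ¬(a = i ∧ b = j) := by
    rintro ⟨rfl, rfl⟩
    simp only [swap_apply_left, swap_apply_right] at hac hcb
    exact (hac.trans hcb).asymm h.lt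
  have hb_ne {y : Fin n} (hay : w (swap i j a) < w (swap i j y)) : ¬(b = i ∧ y = j) := by
    rintro ⟨rfl, rfl⟩
    rw [swap_apply_right, swap_apply_of_ne_of_ne hab.ne (hab.trans h.covBy.lt).ne] at hay
    exact hay.asymm (h.lt_of_lt a hab)
  exact (swap i j).injective <| hw (hswap_lt hab hab_ne)
    ⟨hswap_lt hbc (hb_ne hac), hac, hcb⟩ ⟨hswap_lt hbd (hb_ne had), had, hdb⟩

lemma eq_revPerm_of_strictAnti (hw : StrictAnti w) : w = Fin.revPerm := by
  have hid : w ∘ Fin.rev = id := (hw.comp Fin.rev_strictAnti).eq_id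
  ext a : 1
  simpa using congrFun hid a.rev

lemma eq_revPerm_or_exists_isMinAscent (w : Perm (Fin n)) :
    w = Fin.revPerm ∨ ∃ i j, IsMinAscent w i j := by
  let A : Set (Fin n) := {i | ¬IsMax i ∧ w i < w (Order.succ i)}
  have hdesc {a : Fin n} (ha : ¬IsMax a) (haA : a ∉ A) : w (Order.succ a) < w a :=
    (not_lt.1 fun h => haA ⟨ha, h⟩).lt_of_ne
      (w.injective.ne (Order.lt_succ_of_not_isMax ha).ne')
  rcases A.eq_empty_or_nonempty with hA | hA
  · refine .inl (eq_revPerm_of_strictAnti (strictAnti_of_succ_lt fun a ha => ?_))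
    exact hdesc ha (by simp [hA])
  · obtain ⟨i, ⟨hi, hlt⟩, hmin⟩ := wellFounded_lt.has_min A hA
    have hanti : StrictAntiOn w (Set.Iic i) := by
      refine strictAntiOn_of_succ_lt Set.ordConnected_Iic fun a ha _ hai => hdesc ha fun haA => ?_
      exact hmin a haA ((Order.lt_succ_of_not_isMax ha).trans_le hai)
    exact .inr ⟨i, Order.succ i, Order.covBy_succ_of_not_isMax hi, hlt,
      fun a ha => hanti ha.le Set.self_mem_Iic ha⟩

lemma toLex_lt_toLex_mul_swap (hij : i ≤ j) (hlt : w i < w j) :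
    toLex ⇑w < toLex ⇑(w * swap i j) := by
  have h : (w * swap i j) j < (w * swap i j) i := by simpa using hlt
  have hw : ⇑(w * swap i j) ∘ swap i j = w := by
    ext
    simp
  simpa only [hw] using Pi.lex_desc hij h

@[elab_as_elim]
lemma perm_minAscent_induction {P : Perm (Fin n) → Prop} (revPerm : P Fin.revPerm)
    (mul_swap : ∀ w i j, IsMinAscent w i j → P (w * swap i j) → P w) (w : Perm (Fin n)) : P w := by
  have hwf : WellFounded fun v w : Perm (Fin n) => toLex ⇑v > toLex ⇑w :=
    InvImage.wf (fun v : Perm (Fin n) => toLex ⇑v) wellFounded_gt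
  induction w using hwf.induction with
  | _ w ih =>
    rcases eq_revPerm_or_exists_isMinAscent w with rfl | ⟨i, j, h⟩
    · exact revPerm
    · exact mul_swap w i j h (ih _ (toLex_lt_toLex_mul_swap h.covBy.le h.lt))

end Perm

section Rothe

variable {n : ℕ} {w : Perm (Fin n)} {i j p a : Fin n}

lemma mem_rothe_apply : a ∈ rothe w (w p) ↔ w p < w a ∧ a < p := by
  simp [rothe]

lemma mem_rothe_mul_swap_apply :
    a ∈ rothe (w * swap i j) (w p) ↔ w p < w (swap i j a) ∧ a < swap i j p := by
  have hp : w p = (w * swap i j) (swap i j p) := by simp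
  rw [hp, mem_rothe_apply, ← hp, Perm.mul_apply]

lemma rothe_revPerm (k : Fin n) : rothe Fin.revPerm k = Iio k.rev := by
  ext a
  simp [rothe, Fin.lt_rev_iff]

lemma IsMinAscent.rothe_apply_eq_Iio (h : IsMinAscent w i j) : rothe w (w i) = Iio i := by
  ext a
  rw [mem_rothe_apply, mem_Iio]
  exact and_iff_right_of_imp (h.lt_of_lt a)

lemma IsMinAscent.rothe_mul_swap_apply_eq_Iic (h : IsMinAscent w i j) :
    rothe (w * swap i j) (w i) = Iic i := by
  ext a
  rw [mem_rothe_mul_swap_apply, swap_apply_left, mem_Iic, h.covBy.lt_iff_le_left,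
    and_iff_right_of_imp]
  intro ha
  rcases ha.eq_or_lt with rfl | hlt
  · simpa using h.lt
  · rw [swap_apply_of_ne_of_ne hlt.ne (hlt.trans h.covBy.lt).ne]
    exact h.lt_of_lt a hlt

lemma rothe_apply_eq_swap_smul (hij : i ⋖ j) (hlt : w i < w j) (hp : p ≠ i) :
    rothe w (w p) = swap i j • rothe (w * swap i j) (w p) := by
  ext a
  rw [mem_swap_smul_finset, mem_rothe_apply, mem_rothe_mul_swap_apply, swap_apply_self]
  refine and_congr_right fun ha => (swap_lt_swap_iff_of_covBy hij ?_ (by tauto)).symm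
  rintro ⟨rfl, rfl⟩
  exact ha.asymm hlt

lemma mem_rothe_mul_swap_of_mem (hij : i < j) (hlt : w i < w j)
    (hj : j ∈ rothe (w * swap i j) (w p)) : i ∈ rothe (w * swap i j) (w p) := by
  rw [mem_rothe_mul_swap_apply, swap_apply_right] at hj
  rw [mem_rothe_mul_swap_apply, swap_apply_left]
  exact ⟨hj.1.trans hlt, hij.trans hj.2⟩

lemma lt_and_lt_of_mem_rothe_mul_swap (hij : i ⋖ j) (hp : p ≠ i)
    (hi : i ∈ rothe (w * swap i j) (w p)) (hj : j ∉ rothe (w * swap i j) (w p)) :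
    j < p ∧ w i < w p ∧ w p < w j := by
  rw [mem_rothe_mul_swap_apply, swap_apply_left] at hi
  rw [mem_rothe_mul_swap_apply, swap_apply_right] at hj
  have hpj : p ≠ j := by
    rintro rfl
    exact hi.1.false
  rw [swap_apply_of_ne_of_ne hp hpj] at hi hj
  have hjp : j < p := hpj.symm.lt_of_le (hij.lt_iff_le_right.1 hi.2)
  exact ⟨hjp, (w.injective.ne hp.symm).lt_of_le (not_lt.1 fun h => hj ⟨h, hjp⟩), hi.1⟩

end Rothe

section MaxPoly

variable {n : ℕ} {w : Perm (Fin n)} {i j : Fin n}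

lemma maxPoly_rothe_revPerm :
    MaxPoly (rothe (Fin.revPerm : Perm (Fin n))) = ∏ a : Fin n, X a ^ (n - 1 - (a : ℕ)) := by
  calc MaxPoly (rothe Fin.revPerm) = ∏ k : Fin n, ∏ a ∈ Iio k.rev, X a := by
        simp only [maxPoly_eq_prod_galePoly, rothe_revPerm, galePoly_Iio]
    _ = ∏ k : Fin n, ∏ a ∈ Iio k, X a := Equiv.prod_comp Fin.revPerm fun k => ∏ a ∈ Iio k, X a
    _ = ∏ a : Fin n, ∏ _k ∈ Ioi a, X a := prod_comm' (by simp)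
    _ = ∏ a : Fin n, X a ^ (n - 1 - (a : ℕ)) := by simp

lemma maxPoly_rothe_eq_mul (v w : Perm (Fin n)) (i : Fin n) :
    MaxPoly (rothe v) =
      galePoly (rothe v (w i)) * ∏ p ∈ univ.erase i, galePoly (rothe v (w p)) := by
  rw [mul_prod_erase univ (fun p => galePoly (rothe v (w p))) (mem_univ i),
    maxPoly_eq_prod_galePoly, Equiv.prod_comp w fun k => galePoly (rothe v k)]

/- An entry `w p` whose column is not already symmetric in `x_i` and `x_j` plays the role of 2 or 3
in a pattern 1432 or 1423 with `w i` and `w j` as 1 and 4, so there is at most one. -/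
lemma isDemazure_prod_galePoly_rothe (hw : Avoids1432And1423 w) (hij : i ⋖ j) (hlt : w i < w j) :
    IsDemazure i j (∏ p ∈ univ.erase i, galePoly (rothe (w * swap i j) (w p)))
      (∏ p ∈ univ.erase i, galePoly (rothe w (w p))) := by
  refine isDemazure_prod hij.ne _ (fun p hp => ?_) ((hw hij.lt).anti ?_)
  · rw [rothe_apply_eq_swap_smul hij hlt (ne_of_mem_erase hp)]
    exact isDemazure_galePoly_swap_smul hij (mem_rothe_mul_swap_of_mem hij.lt hlt)
  · rintro p ⟨hp, hne⟩
    have himp := mt (rename_swap_galePoly hij) hne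
    rw [Classical.not_imp] at himp
    exact lt_and_lt_of_mem_rothe_mul_swap hij (ne_of_mem_erase hp) himp.1 himp.2

lemma IsMinAscent.sub_mul_maxPoly_rothe (h : IsMinAscent w i j) (hw : Avoids1432And1423 w) :
    (X i - X j) * MaxPoly (rothe w) =
      MaxPoly (rothe (w * swap i j)) - rename (swap i j) (MaxPoly (rothe (w * swap i j))) := by
  rw [maxPoly_rothe_eq_mul w w i, maxPoly_rothe_eq_mul (w * swap i j) w i, h.rothe_apply_eq_Iio,
    h.rothe_mul_swap_apply_eq_Iic, galePoly_Iic, mul_assoc (X i)]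
  refine (isDemazure_prod_galePoly_rothe hw h.covBy h.lt).mul_left ?_
  exact rename_swap_galePoly h.covBy (by simp)

end MaxPoly

/-- If `w` avoids the patterns 1432 and 1423, then the Schubert polynomial `S_w` equals the
upper bound `Max_w`. -/
theorem schubert_eq_max_of_avoids_1432_1423 (n : ℕ) (hn : 1 ≤ n) (w : Equiv.Perm (Fin n))
    (S : Equiv.Perm (Fin n) → MvPolynomial (Fin n) ℤ) (hS : IsSchubertFamily S)
    (h1432 : AvoidsPattern w ![1, 4, 3, 2]) (h1423 : AvoidsPattern w ![1, 4, 2, 3]) :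
    S w = MaxPoly (rothe w) := by
  have hw := avoids1432And1423_of_avoidsPattern h1432 h1423
  clear h1432 h1423
  induction w using perm_minAscent_induction with
  | revPerm => rw [hS.1, maxPoly_rothe_revPerm]
  | mul_swap w i j h ih =>
    have hij : (i : ℕ) + 1 = j := Nat.covBy_iff_add_one_eq.1 h.covBy.coe_fin
    have hX : (X i - X j : MvPolynomial (Fin n) ℤ) ≠ 0 :=
      sub_ne_zero.2 ((X_inj i j).not.2 h.covBy.ne)
    refine mul_left_cancel₀ hX ?_
    rw [hS.2 w i j hij h.lt, ih (hw.mul_swap h), h.sub_mul_maxPoly_rothe hw]
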